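/- arXiv:1507.06708 — 2 statements merged into one kernel-verified Lean document; each statement's English description precedes it below -/
import Mathlib

section
/- Let p be an odd prime and let d be an integer greater than one. Then there exists a prime ℓ such that ℓ divides p^d + 1, ℓ does not divide p^j + 1 for every integer j with 0 < j < d, and ℓ does not divide p^j − 1 for every integer j with 0 < j < 2d. -/
/-!
Put `n = 2 * d > 2`. It suffices to find a prime `ℓ` modulo which `p` has multiplicative order
exactly `n`: then `ℓ` divides `p ^ n - 1 = (p ^ d - 1) * (p ^ d + 1)` but not `p ^ d - 1`, and
`ℓ ∣ p ^ j + 1` would give `ℓ ∣ p ^ (2 * j) - 1`.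

Such an `ℓ` is found among the prime divisors of `N = Φ_n(p)`, where `Φ_n` is the `n`-th cyclotomic
polynomial. If `q` is a prime divisor of `N` and `n = q ^ k * m` with `q ∤ m`, then `p` has order `m`
modulo `q` (`exists_isPrimitiveRoot_of_dvd_cyclotomic`). If no prime divisor of `N` gives order `n`,
every such `q` divides `n`; since `m ∣ q - 1`, it is the largest prime factor of `n`, so `N` is a
power of a single prime `q`. Moreover `q ^ 2 ∤ N`
(`not_sq_dvd_cyclotomic`, a case of lifting the exponent), so `N ∣ q`. This contradicts
`N > (p - 1) ^ φ(n) ≥ 2 ^ (q - 1) ≥ q`.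
-/

open Polynomial

/-- A prime divisor `q` of `Φ_n(a)` sees `a` as an element of order the `q`-free part of `n`. -/
lemma exists_isPrimitiveRoot_of_dvd_cyclotomic {n a q : ℕ} (hn : n ≠ 0) (hq : q.Prime)
    (h : (q : ℤ) ∣ (cyclotomic n ℤ).eval (a : ℤ)) :
    ∃ k m : ℕ, ¬ q ∣ m ∧ n = q ^ k * m ∧ IsPrimitiveRoot (a : ZMod q) m := by
  have : Fact q.Prime := ⟨hq⟩
  obtain ⟨k, m, hm, hnk⟩ := Nat.exists_eq_pow_mul_and_not_dvd hn q hq.ne_one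
  refine ⟨k, m, hm, hnk, ?_⟩
  have : NeZero (m : ZMod q) := ⟨fun h0 => hm ((ZMod.natCast_eq_zero_iff _ _).1 h0)⟩
  rw [← isRoot_cyclotomic_prime_pow_mul_iff_of_charP (k := k) (p := q), ← hnk, IsRoot.def]
  have h1 := (ZMod.intCast_zmod_eq_zero_iff_dvd _ q).2 h
  have h2 := eval_intCast_map (Int.castRingHom (ZMod q)) (cyclotomic n ℤ) (a : ℤ)
  rw [map_cyclotomic] at h2
  simpa [h1] using h2

lemma dvd_sub_one_of_isPrimitiveRoot {a q m : ℕ} (hq : q.Prime) (hm : m ≠ 0)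
    (h : IsPrimitiveRoot (a : ZMod q) m) : m ∣ q - 1 := by
  have : Fact q.Prime := ⟨hq⟩
  rw [h.eq_orderOf]
  exact ZMod.orderOf_dvd_card_sub_one (h.ne_zero hm)

/-- For `a > 1` odd and `n > 2`, a prime factor of `n` divides `Φ_n(a)` at most once.
For `q` odd, with `x = a ^ (n / q)`,
the value divides `1 + x + ⋯ + x ^ (q - 1)`, which `q` divides exactly once; for `q = 2`, the number
`n` is a power of two greater than two, so the value divides `a ^ (n / 2) + 1`, which is
`2` modulo `4`. -/
lemma not_sq_dvd_cyclotomic {n a q : ℕ} (hn : 2 < n) (ha : Odd a) (hq : q.Prime)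
    (hqn : q ∣ n) (h : (q : ℤ) ∣ (cyclotomic n ℤ).eval (a : ℤ)) (ha1 : 1 < a) :
    ¬ (q : ℤ) ^ 2 ∣ (cyclotomic n ℤ).eval (a : ℤ) := by
  have : Fact q.Prime := ⟨hq⟩
  obtain ⟨k, m, hm, hnk, hprim⟩ := exists_isPrimitiveRoot_of_dvd_cyclotomic (by omega) hq h
  have hm0 : m ≠ 0 := by rintro rfl; simp at hm
  obtain ⟨e, he⟩ := hqn
  have he0 : 0 < e := by
    rcases Nat.eq_zero_or_pos e with rfl | h0
    · omega
    · exact h0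
  have hme : m ∣ e := by
    have h1 : m ∣ q * e := by rw [← he, hnk]; exact dvd_mul_left _ _
    exact (((Nat.Prime.coprime_iff_not_dvd hq).2 hm).symm).dvd_of_dvd_mul_left h1
  have hxq : (q : ℤ) ∣ (a : ℤ) ^ e - 1 := by
    rw [← ZMod.intCast_zmod_eq_zero_iff_dvd]
    push_cast
    rw [(hprim.pow_eq_one_iff_dvd e).2 hme, sub_self]
  have hx1 : (a : ℤ) ^ e - 1 ≠ 0 := by
    have : 1 < (a : ℤ) ^ e := one_lt_pow₀ (by exact_mod_cast ha1) he0.ne'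
    omega
  have hdvd : (cyclotomic n ℤ).eval (a : ℤ) ∣
      ∑ i ∈ Finset.range q, ((a : ℤ) ^ e) ^ i * 1 ^ (q - 1 - i) := by
    have hmem : e ∈ n.properDivisors := by
      rw [Nat.mem_properDivisors]
      refine ⟨⟨q, by rw [he, mul_comm]⟩, ?_⟩
      have := hq.two_le
      nlinarith
    have h1 := eval_dvd (x := (a : ℤ))
      (X_pow_sub_one_mul_cyclotomic_dvd_X_pow_sub_one_of_dvd ℤ hmem)
    simp only [eval_mul, eval_sub, eval_pow, eval_X, eval_one] at h1
    have h2 : (a : ℤ) ^ n - 1 = ((a : ℤ) ^ e - 1) *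
        ∑ i ∈ Finset.range q, ((a : ℤ) ^ e) ^ i * 1 ^ (q - 1 - i) := by
      rw [mul_comm, geom_sum₂_mul, ← pow_mul, one_pow, he, mul_comm e]
    rw [h2] at h1
    exact (mul_dvd_mul_iff_left hx1).1 h1
  intro hsq
  have hS := hsq.trans hdvd
  rcases hq.eq_two_or_odd' with rfl | hodd
  · -- the order of `a` modulo `2` is `1`, so `n` is a power of two and `e = n / 2` is even
    have hm1 : m = 1 := by
      simpa using dvd_sub_one_of_isPrimitiveRoot Nat.prime_two hm0 hprim
    subst hm1
    have heven : Even e := by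
      match k, hnk with
      | 0, hnk => simp at hnk; omega
      | 1, hnk => simp at hnk; omega
      | k + 2, hnk =>
        refine ⟨2 ^ k, ?_⟩
        rw [he, pow_succ, pow_succ] at hnk
        omega
    obtain ⟨f, rfl⟩ := heven
    have hodd : Odd ((a : ℤ) ^ f) := by
      apply Odd.pow
      exact_mod_cast ha
    have h4 := Int.sq_mod_four_eq_one_of_odd hodd
    rw [← pow_mul, mul_two] at h4
    simp [Finset.sum_range_succ] at hS
    omega
  · have h1 := emultiplicity_geom_sum₂_eq_one (R := ℤ) (Nat.prime_iff_prime_int.1 hq) hodd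
      (x := (a : ℤ) ^ e) (y := 1) hxq (fun hd => by
        have := (Nat.prime_iff_prime_int.1 hq).not_isUnit
        exact this (isUnit_of_dvd_one (by simpa using dvd_sub hd hxq)))
    have h2 := le_emultiplicity_of_pow_dvd hS
    rw [h1] at h2
    exact absurd h2 (by norm_num)

/-- Zsigmondy's theorem for an odd base `a` and an exponent `n > 2`. -/
lemma exists_prime_isPrimitiveRoot {n a : ℕ} (hn : 2 < n) (ha : Odd a) (ha1 : 1 < a) :
    ∃ q : ℕ, q.Prime ∧ IsPrimitiveRoot (a : ZMod q) n := by
  by_contra! hcon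
  set N := ((cyclotomic n ℤ).eval (a : ℤ)).natAbs with hN
  have hlt : (a - 1) ^ n.totient < N :=
    sub_one_pow_totient_lt_natAbs_cyclotomic_eval (by omega) (by omega)
  have ha2 : 2 ≤ a - 1 := by
    obtain ⟨c, rfl⟩ := ha
    omega
  have h2lt : 2 ^ n.totient < N := (Nat.pow_le_pow_left ha2 _).trans_lt hlt
  have hN1 : N ≠ 1 := by
    have := Nat.one_le_two_pow (n := n.totient)
    omega
  have hbad : ∀ r : ℕ, r.Prime → r ∣ N →
      (r : ℤ) ∣ (cyclotomic n ℤ).eval (a : ℤ) ∧ r ∣ n ∧ ∀ s : ℕ, s.Prime → s ∣ n → s ≤ r := by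
    intro r hr hrN
    have hrN' := Int.natCast_dvd.2 hrN
    obtain ⟨k, m, hm, hnk, hprim⟩ := exists_isPrimitiveRoot_of_dvd_cyclotomic (by omega) hr hrN'
    have hk : k ≠ 0 := by
      rintro rfl
      rw [pow_zero, one_mul] at hnk
      exact hcon r hr (hnk ▸ hprim)
    refine ⟨hrN', hnk ▸ (dvd_pow_self r hk).mul_right m, fun s hs hsn => ?_⟩
    rw [hnk] at hsn
    rcases hs.dvd_mul.1 hsn with h1 | h1
    · exact Nat.le_of_dvd hr.pos (hs.dvd_of_dvd_pow h1)
    · have hm0 : m ≠ 0 := by rintro rfl; simp at hm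
      have h2 := Nat.le_of_dvd (by have := hr.two_le; omega)
        (h1.trans (dvd_sub_one_of_isPrimitiveRoot hr hm0 hprim))
      omega
  obtain ⟨q, hq, hqN⟩ := Nat.exists_prime_and_dvd hN1
  obtain ⟨hqN', hqn, hmax⟩ := hbad q hq hqN
  have hpow := Nat.eq_prime_pow_of_unique_prime_dvd (n := N) (p := q) (by omega)
    (fun {r} hr hrN => le_antisymm (hmax r hr (hbad r hr hrN).2.1)
      ((hbad r hr hrN).2.2 q hq hqn))
  have hsq : ¬ q ^ 2 ∣ N := fun h0 => by
    apply not_sq_dvd_cyclotomic hn ha hq hqn hqN' ha1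
    exact_mod_cast Int.natCast_dvd.2 h0
  have hNq : N ≤ q := by
    generalize N.primeFactorsList.length = t at hpow
    have ht : t < 2 := by
      by_contra! ht
      exact hsq (hpow ▸ pow_dvd_pow q ht)
    rw [hpow]
    exact (Nat.pow_le_pow_right hq.pos (by omega : t ≤ 1)).trans (pow_one q).le
  have htot : q - 1 ≤ n.totient := by
    rw [← Nat.totient_prime hq]
    exact Nat.le_of_dvd (Nat.totient_pos.2 (by omega)) (Nat.totient_dvd_of_dvd hqn)
  have h3 : 2 ^ (q - 1) ≤ 2 ^ n.totient := Nat.pow_le_pow_right (by norm_num) htot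
  have h4 : q - 1 < 2 ^ (q - 1) := Nat.lt_two_pow_self
  omega


/-- Zsigmondy's theorem, in the form used in the paper (Theorem 4.1):
for an odd prime `p` and an integer `d > 1`, there is a prime divisor of `p ^ d + 1`
that does not divide `p ^ j + 1` for `0 < j < d` and does not divide `p ^ j - 1`
for `0 < j < 2 * d`. -/
theorem zsigmondy_variant (p : ℕ) (hp : p.Prime) (hp_odd : Odd p)
    (d : ℕ) (hd : 1 < d) :
    ∃ ℓ : ℕ, ℓ.Prime ∧ ℓ ∣ p ^ d + 1 ∧
      (∀ j : ℕ, 0 < j → j < d → ¬ ℓ ∣ p ^ j + 1) ∧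
      (∀ j : ℕ, 0 < j → j < 2 * d → ¬ ℓ ∣ p ^ j - 1) := by
  obtain ⟨q, hq, hprim⟩ := exists_prime_isPrimitiveRoot (n := 2 * d) (by omega) hp_odd hp.one_lt
  have : Fact q.Prime := ⟨hq⟩
  have hadd : ∀ j : ℕ, q ∣ p ^ j + 1 ↔ (p : ZMod q) ^ j + 1 = 0 := fun j => by
    rw [← ZMod.natCast_eq_zero_iff]
    push_cast
    rfl
  have hsub : ∀ j : ℕ, q ∣ p ^ j - 1 ↔ (p : ZMod q) ^ j = 1 := fun j => by
    rw [← ZMod.natCast_eq_zero_iff, Nat.cast_sub (Nat.one_le_pow _ _ hp.pos)]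
    push_cast
    exact sub_eq_zero
  refine ⟨q, hq, ?_, fun j hj hjd h => ?_, fun j hj hjd h => ?_⟩
  · rw [hadd]
    have h1 : ((p : ZMod q) ^ d - 1) * ((p : ZMod q) ^ d + 1) = 0 := by
      linear_combination hprim.pow_eq_one
    refine (mul_eq_zero.1 h1).resolve_left fun h2 => ?_
    exact hprim.pow_ne_one_of_pos_of_lt (by omega) (by omega) (sub_eq_zero.1 h2)
  · rw [hadd] at h
    refine hprim.pow_ne_one_of_pos_of_lt (l := 2 * j) (by omega) (by omega) ?_
    linear_combination ((p : ZMod q) ^ j - 1) * h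
  · exact hprim.pow_ne_one_of_pos_of_lt hj.ne' hjd ((hsub j).1 h)
end

section
/- Let K be a number field with [K : ℚ] ≥ 2 and let O_K be its ring of integers. Then there are infinitely many prime numbers p for which there exist two distinct nonzero prime ideals 𝔭₁ ≠ 𝔭₂ of O_K, each containing p, such that the residue fields O_K/𝔭₁ and O_K/𝔭₂ both have cardinality p. -/
/-!
The argument replaces Chebotarev by an elementary one. As `[K : ℚ] ≥ 2`, there are two distinct
embeddings `σ₁, σ₂` of `K` into a common number field `L`. Infinitely many rational primes `p` have
a prime `Q` of `𝓞 L` above them of residue degree one (`exists_degree_one_prime`). The primes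
`σᵢ⁻¹(Q)` of `𝓞 K` then also have residue field `𝔽_p`. If they coincide, then for every `x ∈ 𝓞 K`
an integer `m` with `x ≡ m` modulo this common prime gives `σ₁ x ≡ m ≡ σ₂ x` modulo `Q`; so for a
fixed `x` with `σ₁ x ≠ σ₂ x`, the prime `p` divides the nonzero integer `N(σ₁ x - σ₂ x)`, which
happens for finitely many `p` only.

Degree-one primes of `𝓞 L` come from an integral primitive element `θ`: the values of its
characteristic polynomial `f` at integers have prime divisors outside any given finite set
(`exists_prime_dvd_eval`). If `p ∣ f(a) = N(a - θ)`, some prime `Q` above `p` contains `a - θ`, and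
when `p` does not divide a fixed `d` with `d • 𝓞 L ⊆ ℤ[θ]`, every element of `𝓞 L` is congruent
to an integer modulo `Q`.
-/

open NumberField Polynomial

/-- Schur's theorem: the values of a nonconstant integer polynomial have a prime divisor not
dividing a prescribed nonzero integer. -/
lemma exists_prime_dvd_eval (f : ℤ[X]) (hf : 0 < f.natDegree) (N : ℕ) (hN : N ≠ 0) :
    ∃ p : ℕ, p.Prime ∧ ¬ p ∣ N ∧ ∃ a : ℤ, (p : ℤ) ∣ f.eval a := by
  have hconst : ∀ v : ℤ, {x : ℤ | f.eval x = v}.Finite := by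
    intro v
    by_contra h
    have : f = C v := Polynomial.eq_of_infinite_eval_eq f (C v) (by simpa using h)
    rw [this] at hf
    simp at hf
  obtain ⟨c, hc⟩ : ∃ c : ℤ, f.eval c ≠ 0 := by
    obtain ⟨c, hc⟩ := (hconst 0).exists_notMem
    exact ⟨c, hc⟩
  -- `f (c + f(c) N t) = f(c) (1 + N s)`, and for some `t` the second factor is not `± 1`.
  have hinj : Function.Injective (fun t : ℤ => c + f.eval c * N * t) := by
    intro t t' h
    have h0 : f.eval c * (N : ℤ) ≠ 0 := mul_ne_zero hc (by exact_mod_cast hN)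
    exact mul_left_cancel₀ h0 (add_left_cancel h)
  obtain ⟨t, ht⟩ := ((((hconst (f.eval c)).union (hconst (-f.eval c))).preimage
    hinj.injOn)).exists_notMem
  simp only [Set.mem_preimage, Set.mem_union, Set.mem_ofPred_eq, not_or] at ht
  obtain ⟨s, hs⟩ := Polynomial.sub_dvd_eval_sub (c + f.eval c * N * t) c f
  have hval : f.eval (c + f.eval c * N * t) = f.eval c * (1 + N * (t * s)) := by
    linear_combination hs
  have hne : (1 + N * (t * s) : ℤ).natAbs ≠ 1 := by
    intro h
    rcases Int.natAbs_eq_iff.mp h with h | h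
    · apply ht.1; rw [hval, h]; simp
    · apply ht.2; rw [hval, h]; simp
  obtain ⟨p, hp, hdvd⟩ := Nat.exists_prime_and_dvd hne
  rw [← Int.natCast_dvd] at hdvd
  refine ⟨p, hp, fun hpN => ?_, _, hval ▸ hdvd.mul_left _⟩
  have h1 : (p : ℤ) ∣ 1 := by
    have h2 : (p : ℤ) ∣ N * (t * s) := (Int.natCast_dvd_natCast.mpr hpN).mul_right _
    simpa using dvd_sub hdvd h2
  exact hp.one_lt.ne' (by exact_mod_cast Int.eq_one_of_dvd_one (by positivity) h1)

lemma card_quotient_eq {R : Type*} [CommRing R] (P : Ideal R) [P.IsPrime] {p : ℕ} (hp : p.Prime)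
    (hpP : (p : R) ∈ P) (h : ∀ x : R, ∃ m : ℤ, x - m ∈ P) : Nat.card (R ⧸ P) = p := by
  have : Fact p.Prime := ⟨hp⟩
  have h0 : (p : R ⧸ P) = 0 := by
    simpa using Ideal.Quotient.eq_zero_iff_mem.mpr hpP
  have : CharP (R ⧸ P) p :=
    (CharP.charP_iff_prime_eq_zero hp).mpr h0
  have hbij : Function.Bijective (ZMod.castHom (dvd_refl p) (R ⧸ P)) := by
    refine ⟨RingHom.injective _, fun y => ?_⟩
    obtain ⟨x, rfl⟩ := Ideal.Quotient.mk_surjective y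
    obtain ⟨m, hm⟩ := h x
    refine ⟨m, ?_⟩
    rw [map_intCast, ← sub_eq_zero, ← neg_sub, neg_eq_zero]
    simpa using Ideal.Quotient.eq_zero_iff_mem.mpr hm
  rw [← Nat.card_congr (Equiv.ofBijective _ hbij), Nat.card_zmod]

/-- An integral primitive element `θ` generates an order of finite index: a fixed nonzero integer,
the discriminant of the power basis, multiplies `𝓞 L` into `ℤ[θ]`. -/
lemma exists_integral_generator (L : Type*) [Field L] [NumberField L] :
    ∃ (θ : 𝓞 L) (d : ℤ), d ≠ 0 ∧ ∀ x : 𝓞 L, ∃ g : ℤ[X], aeval θ g = d * x := by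
  obtain ⟨α, hα⟩ := Field.exists_primitive_element ℚ L
  obtain ⟨m, hm, hint⟩ :=
    ((IsFractionRing.isAlgebraic_iff ℤ ℚ L).mpr
      (Algebra.IsAlgebraic.isAlgebraic (R := ℚ) α)).exists_integral_multiple
  have htop : Algebra.adjoin ℚ {m • α} = ⊤ := by
    have h1 : Algebra.adjoin ℚ {α} = ⊤ := by
      rw [← IntermediateField.adjoin_simple_toSubalgebra_of_isAlgebraic
        (Algebra.IsAlgebraic.isAlgebraic α), hα, IntermediateField.top_toSubalgebra]
    rw [eq_top_iff, ← h1, Algebra.adjoin_le_iff, Set.singleton_subset_iff]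
    have h2 : α = (m : ℚ)⁻¹ • (m • α) := by
      rw [← Int.cast_smul_eq_zsmul ℚ m α, inv_smul_smul₀ (by exact_mod_cast hm)]
    have h3 := Subalgebra.smul_mem _ (Algebra.self_mem_adjoin_singleton ℚ (m • α)) (m : ℚ)⁻¹
    rwa [← h2] at h3
  let B : PowerBasis ℚ L := PowerBasis.ofAdjoinEqTop (Algebra.IsIntegral.isIntegral _) htop
  have hgen : B.gen = m • α := by simp [B]
  have hB : IsIntegral ℤ B.gen := hgen ▸ hint
  have hd : IsIntegral ℤ (Algebra.discr ℚ B.basis) := by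
    apply Algebra.discr_isIntegral
    intro i
    rw [B.basis_eq_pow]
    exact hB.pow _
  obtain ⟨d, hd⟩ := IsIntegrallyClosed.isIntegral_iff.mp hd
  obtain ⟨θ, hθ⟩ : ∃ θ : 𝓞 L, algebraMap (𝓞 L) L θ = B.gen := ⟨⟨B.gen, hB⟩, rfl⟩
  refine ⟨θ, d, ?_, fun x => ?_⟩
  · rintro rfl
    exact Algebra.discr_not_zero_of_basis ℚ B.basis (by rw [← hd]; simp)
  · have := Algebra.discr_mul_isIntegral_mem_adjoin ℚ hB x.isIntegral_coe
    rw [Algebra.adjoin_singleton_eq_range_aeval] at this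
    obtain ⟨g, hg⟩ := this
    refine ⟨g, RingOfIntegers.coe_injective ?_⟩
    have hgL : aeval B.gen g = Algebra.discr ℚ B.basis • (x : L) := hg
    rw [← hd, Algebra.smul_def] at hgL
    rw [← aeval_algebraMap_apply, hθ]
    simpa using hgL

/-- There are primes of `𝓞 L` of residue degree one over rational primes avoiding any
prescribed finite set, expressed as the primes not dividing `N`. -/
lemma exists_degree_one_prime (L : Type*) [Field L] [NumberField L] (N : ℕ) (hN : N ≠ 0) :
    ∃ p : ℕ, p.Prime ∧ ¬ p ∣ N ∧ ∃ Q : Ideal (𝓞 L), Q.IsPrime ∧ (p : 𝓞 L) ∈ Q ∧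
      ∀ x : 𝓞 L, ∃ m : ℤ, x - m ∈ Q := by
  obtain ⟨θ, d, hd, hgen⟩ := exists_integral_generator L
  let f : ℤ[X] := (Algebra.lmul ℤ (𝓞 L) θ).charpoly
  have hf : 0 < f.natDegree := by
    rw [LinearMap.charpoly_natDegree]
    exact Module.finrank_pos
  obtain ⟨p, hp, hpN, a, ha⟩ := exists_prime_dvd_eval f hf (N * d.natAbs)
    (mul_ne_zero hN (Int.natAbs_ne_zero.mpr hd))
  have hnorm : f.eval a = Algebra.norm ℤ ((a : 𝓞 L) - θ) := by
    rw [LinearMap.eval_charpoly, Algebra.norm_apply]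
    congr 1
    ext y
    simp
  rw [hnorm, Int.natCast_dvd, ← Ideal.absNorm_span_singleton] at ha
  obtain ⟨Q, hQ, hQp, hQd⟩ := Ideal.exists_isMaximal_dvd_of_dvd_absNorm' hp _ ha
  have hpQ : (p : 𝓞 L) ∈ Q := by
    have : (p : ℤ) ∈ Q.under ℤ := hQp ▸ Ideal.mem_span_singleton_self _
    simpa [Ideal.under_def] using this
  have haQ : (a : 𝓞 L) - θ ∈ Q := Ideal.dvd_iff_le.mp hQd (Ideal.mem_span_singleton_self _)
  have hpd : IsCoprime (p : ℤ) d := by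
    rw [(Nat.prime_iff_prime_int.mp hp).coprime_iff_not_dvd, Int.natCast_dvd]
    exact fun h => hpN (h.mul_left _)
  refine ⟨p, hp, fun h => hpN (h.mul_right _), Q, hQ.isPrime, hpQ, fun x => ?_⟩
  obtain ⟨g, hg⟩ := hgen x
  obtain ⟨u, v, huv⟩ := hpd
  -- `v` inverts `d` modulo `p`, so `x ≡ v d x = v g(θ) ≡ v g(a)` modulo `Q`.
  refine ⟨v * g.eval a, ?_⟩
  have hga : ((g.eval a : ℤ) : 𝓞 L) - aeval θ g ∈ Q := by
    have h1 := Polynomial.sub_dvd_eval_sub (a : 𝓞 L) θ (g.map (algebraMap ℤ (𝓞 L)))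
    have h2 := Q.mem_of_dvd h1 haQ
    simpa [aeval_def, eval_map, eval₂_at_intCast] using h2
  have huv' : (u : 𝓞 L) * p + v * d = 1 := by exact_mod_cast congrArg (Int.cast : ℤ → 𝓞 L) huv
  have : x - ((v * g.eval a : ℤ) : 𝓞 L) =
      (u * x) * p - v * (((g.eval a : ℤ) : 𝓞 L) - aeval θ g) := by
    push_cast
    rw [hg]
    linear_combination (-x) * huv'
  rw [this]
  exact Q.sub_mem (Q.mul_mem_left _ hpQ) (Q.mul_mem_left _ hga)

/-- A number field other than `ℚ` has two distinct embeddings into a common number field. They can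
be told apart on algebraic integers. -/
lemma exists_two_embeddings (K : Type*) [Field K] [NumberField K]
    (hdeg : 2 ≤ Module.finrank ℚ K) :
    ∃ (L : IntermediateField ℚ (AlgebraicClosure ℚ)) (_ : NumberField L) (σ τ : 𝓞 K →+* 𝓞 L)
      (x : 𝓞 K), σ x ≠ τ x := by
  have hcard : 1 < Fintype.card (K →ₐ[ℚ] AlgebraicClosure ℚ) := by
    rw [AlgHom.card]
    omega
  obtain ⟨σ, τ, hne⟩ := Fintype.one_lt_card_iff.mp hcard
  let L := σ.fieldRange ⊔ τ.fieldRange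
  have : FiniteDimensional ℚ σ.fieldRange := σ.toLinearMap.finiteDimensional_range
  have : FiniteDimensional ℚ τ.fieldRange := τ.toLinearMap.finiteDimensional_range
  have : FiniteDimensional ℚ L := IntermediateField.finiteDimensional_sup _ _
  have hL : NumberField L := { to_charZero := inferInstance, to_finiteDimensional := inferInstance }
  let σ' : K →+* L := (σ : K →+* AlgebraicClosure ℚ).codRestrict L
    fun x => (le_sup_left : σ.fieldRange ≤ L) ⟨x, rfl⟩
  let τ' : K →+* L := (τ : K →+* AlgebraicClosure ℚ).codRestrict L
    fun x => (le_sup_right : τ.fieldRange ≤ L) ⟨x, rfl⟩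
  refine ⟨L, hL, RingOfIntegers.mapRingHom σ', RingOfIntegers.mapRingHom τ', ?_⟩
  by_contra! h
  have h' : ∀ x : 𝓞 K, σ (x : K) = τ (x : K) := fun x =>
    congrArg (fun y : 𝓞 L => ((y : L) : AlgebraicClosure ℚ)) (h x)
  apply hne
  ext y
  obtain ⟨a, b, hb, rfl⟩ := IsFractionRing.div_surjective (A := 𝓞 K) y
  rw [map_div₀, map_div₀]
  exact congrArg₂ _ (h' a) (h' b)

/-- A consequence of the Chebotarev density theorem used in the proof of Theorem 1.1:
if `K` is a number field of degree at least 2, then infinitely many rational primes `p`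
have two distinct degree-one primes of `O_K` above them, i.e. two distinct nonzero prime
ideals of `O_K` containing `p` whose residue fields both have cardinality `p`. -/
theorem infinitely_many_primes_with_two_degree_one_primes_above
    (K : Type*) [Field K] [NumberField K]
    (hdeg : 2 ≤ Module.finrank ℚ K) :
    {p : ℕ | p.Prime ∧
      ∃ P₁ P₂ : Ideal (NumberField.RingOfIntegers K),
        P₁ ≠ P₂ ∧ P₁.IsPrime ∧ P₂.IsPrime ∧ P₁ ≠ ⊥ ∧ P₂ ≠ ⊥ ∧
        (p : NumberField.RingOfIntegers K) ∈ P₁ ∧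
        (p : NumberField.RingOfIntegers K) ∈ P₂ ∧
        Nat.card (NumberField.RingOfIntegers K ⧸ P₁) = p ∧
        Nat.card (NumberField.RingOfIntegers K ⧸ P₂) = p}.Infinite := by
  obtain ⟨L, _, σ, τ, x₀, hx₀⟩ := exists_two_embeddings K hdeg
  have hδ : Algebra.norm ℤ (σ x₀ - τ x₀) ≠ 0 := by
    rw [Ne, Algebra.norm_eq_zero_iff]
    exact sub_ne_zero.mpr hx₀
  refine Set.infinite_of_forall_exists_gt fun n => ?_
  obtain ⟨p, hp, hpN, Q, hQ, hpQ, hres⟩ := exists_degree_one_prime L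
    (n.factorial * (Algebra.norm ℤ (σ x₀ - τ x₀)).natAbs)
    (mul_ne_zero n.factorial_ne_zero (Int.natAbs_ne_zero.mpr hδ))
  -- Every element of `𝓞 K` is an integer modulo the pullback of `Q` along any map `φ : 𝓞 K → 𝓞 L`:
  -- an integer congruent to `φ x` modulo `Q` works.
  have hres' : ∀ (φ : 𝓞 K →+* 𝓞 L) (x : 𝓞 K), ∃ m : ℤ, x - m ∈ Q.comap φ := by
    intro φ x
    obtain ⟨m, hm⟩ := hres (φ x)
    exact ⟨m, by simpa [Ideal.mem_comap] using hm⟩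
  have hmem : ∀ φ : 𝓞 K →+* 𝓞 L, (p : 𝓞 K) ∈ Q.comap φ := fun φ => by
    simpa [Ideal.mem_comap] using hpQ
  have hbot : ∀ φ : 𝓞 K →+* 𝓞 L, Q.comap φ ≠ ⊥ := fun φ h => by
    have h0 := hmem φ
    rw [h, Ideal.mem_bot] at h0
    exact hp.ne_zero (by exact_mod_cast h0)
  refine ⟨p, ⟨hp, Q.comap σ, Q.comap τ, fun heq => ?_, inferInstance, inferInstance, hbot σ,
    hbot τ, hmem σ, hmem τ, card_quotient_eq _ hp (hmem σ) (hres' σ),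
    card_quotient_eq _ hp (hmem τ) (hres' τ)⟩, ?_⟩
  · obtain ⟨m, hm⟩ := hres' σ x₀
    have hm' := hm
    rw [heq] at hm'
    have hdiff : σ x₀ - τ x₀ ∈ Q := by
      have := Q.sub_mem (Ideal.mem_comap.mp hm) (Ideal.mem_comap.mp hm')
      simpa using this
    have hdvd := Ideal.absNorm_dvd_norm_of_mem hdiff
    rw [Ideal.absNorm_apply, Submodule.cardQuot_apply, card_quotient_eq Q hp hpQ hres,
      Int.natCast_dvd] at hdvd
    exact hpN (hdvd.mul_left _)
  · by_contra! hle
    exact hpN ((hp.dvd_factorial.mpr hle).mul_right _)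
end
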